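/- For every finite word w over {0,1}, the sequence k ↦ d k w converges as k → ∞ (so the asymptotic density d w = lim_{k→∞} d k w exists). -/

import Mathlib

open MeasureTheory Filter Topology
open scoped ENNReal

/-- `m`-fold concatenation of a word. -/
def wordPow (w : List ℕ) (m : ℕ) : List ℕ := (List.replicate m w).flatten

/-- The words of the generalized del Junco–Rudolph construction:
`B 0 = [0]`, `B (k+1) = (B k)^(a·b^k) ++ [1] ++ (B k)^((b-a)·b^k)`. -/
def Bword (b a : ℕ) : ℕ → List ℕ
  | 0 => [0]
  | k + 1 => wordPow (Bword b a k) (a * b ^ k) ++ [1] ++ wordPow (Bword b a k) ((b - a) * b ^ k)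

/-- The height sequence: `h 0 = 1`, `h (k+1) = b^(k+1) * h k + 1`. -/
def hseq (b : ℕ) : ℕ → ℕ
  | 0 => 1
  | k + 1 => b ^ (k + 1) * hseq b k + 1

/-- `w` occurs at position `i` in the periodic bi-infinite word `v^∞`. -/
def OccursPer (w v : List ℕ) (i : ℕ) : Prop :=
  ∀ r < w.length, v.getD ((i + r) % v.length) 0 = w.getD r 0

open Classical in
/-- `d k w`: the frequency of occurrences of `w` in the periodic word `(B k)^∞`. -/
noncomputable def dfreq (b a k : ℕ) (w : List ℕ) : ℝ :=
  (((Finset.range (hseq b k)).filter fun i => OccursPer w (Bword b a k) i).card : ℝ) /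
    (hseq b k : ℝ)

theorem wordPow_succ' (v : List ℕ) (p : ℕ) : wordPow v (p+1) = v ++ wordPow v p := by
  simp [wordPow, List.replicate_succ]

theorem wordPow_len (v : List ℕ) (p : ℕ) : (wordPow v p).length = p * v.length := by
  simp [wordPow]

theorem wordPow_getD (v : List ℕ) (p : ℕ) : ∀ i, i < p * v.length →
    (wordPow v p).getD i 0 = v.getD (i % v.length) 0 := by
  induction p with
  | zero => intro i hi; simp at hi
  | succ p ih =>
    intro i hi
    rw [wordPow_succ']
    by_cases h : i < v.length
    · rw [List.getD_append _ _ _ _ h, Nat.mod_eq_of_lt h]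
    · push Not at h
      rw [List.getD_append_right _ _ _ _ h, ih, Nat.mod_eq_sub_mod h]
      rw [Nat.succ_mul] at hi
      omega

theorem Bword_len (b a : ℕ) (hab : a ≤ b) (k : ℕ) : (Bword b a k).length = hseq b k := by
  induction k with
  | zero => simp [Bword, hseq]
  | succ k ih =>
    simp only [Bword, hseq, List.length_append, wordPow_len, ih, List.length_singleton]
    have : b ^ (k+1) = a * b^k + (b-a) * b^k := by
      rw [← Nat.add_mul, Nat.add_sub_cancel' hab, pow_succ, mul_comm]
    rw [this]; ring

theorem sum_close (f g : ℕ → ℝ) (l m : ℕ) (h1 : ∀ i, |f i - g i| ≤ 1)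
    (h2 : ∀ i, i + l ≤ m → f i = g i) :
    |∑ i ∈ Finset.range m, f i - ∑ i ∈ Finset.range m, g i| ≤ l := by
  rw [← Finset.sum_sub_distrib]
  refine (Finset.abs_sum_le_sum_abs _ _).trans ?_
  have : ∀ i ∈ Finset.range m, |f i - g i| ≤ if m < i + l then (1:ℝ) else 0 := by
    intro i _
    split_ifs with h
    · exact h1 i
    · rw [h2 i (by omega)]; simp
  refine (Finset.sum_le_sum this).trans ?_
  rw [Finset.sum_boole]
  have : ((Finset.range m).filter fun i => m < i + l) ⊆ Finset.Ico (m - l) m := by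
    intro i; simp; omega
  have := Finset.card_le_card this
  rw [Nat.card_Ico] at this
  exact_mod_cast this.trans (by omega)

theorem sum_periodic (f : ℕ → ℝ) (n : ℕ) (hf : ∀ i, f (i + n) = f i) (p : ℕ) :
    ∑ i ∈ Finset.range (p * n), f i = p * ∑ i ∈ Finset.range n, f i := by
  have hp : ∀ p i, f (p * n + i) = f i := by
    intro p
    induction p with
    | zero => simp
    | succ p ih => intro i; rw [← ih i, ← hf (p * n + i)]; congr 1; ring
  induction p with
  | zero => simp
  | succ p ih =>
    rw [Nat.succ_mul, Finset.sum_range_add, ih]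
    simp only [hp]; push_cast; ring

open Classical in
theorem count_close (w v : List ℕ) (p q : ℕ) (f g : ℕ → ℝ)
    (hf : f = fun i => if OccursPer w v i then 1 else 0)
    (hg : g = fun i => if OccursPer w (wordPow v p ++ [1] ++ wordPow v q) i then 1 else 0) :
    |∑ i ∈ Finset.range ((p + q) * v.length + 1), g i
      - (p + q) * ∑ i ∈ Finset.range v.length, f i| ≤ 2 * w.length + 1 := by
  have e : (p + q) * v.length + 1 = p * v.length + 1 + q * v.length := by ring
  have hper : ∀ i, f (i + v.length) = f i := by
    intro i
    have : OccursPer w v (i + v.length) ↔ OccursPer w v i := by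
      unfold OccursPer
      refine forall₂_congr fun r _ => ?_
      rw [show i + v.length + r = i + r + v.length by ring, Nat.add_mod_right]
    simp [hf, this]
  have ul : (wordPow v p ++ [1] ++ wordPow v q).length = p * v.length + 1 + q * v.length := by
    simp [wordPow_len]; ring
  have fg : ∀ i j, |f i - g j| ≤ 1 := by
    intro i j; rw [hf, hg]; dsimp only; split_ifs <;> simp
  have u1 : ∀ i, i < p * v.length → (wordPow v p ++ [1] ++ wordPow v q).getD i 0
      = v.getD (i % v.length) 0 := by
    intro i hi
    rw [List.append_assoc, List.getD_append _ _ _ _ (by rwa [wordPow_len]), wordPow_getD _ _ _ hi]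
  have u2 : ∀ i, i < q * v.length →
      (wordPow v p ++ [1] ++ wordPow v q).getD (p * v.length + 1 + i) 0
      = v.getD (i % v.length) 0 := by
    intro i hi
    rw [List.getD_append_right _ _ _ _ (by simp [wordPow_len]), ← wordPow_getD _ _ _ hi]
    congr 1
    simp [wordPow_len]
  have c1 := sum_close f g w.length (p * v.length) (fun i => fg i i) (by
    intro i hi
    have : OccursPer w v i ↔ OccursPer w (wordPow v p ++ [1] ++ wordPow v q) i := by
      unfold OccursPer
      refine forall₂_congr fun r hr => ?_
      rw [ul, Nat.mod_eq_of_lt (b := p * v.length + 1 + q * v.length) (by omega), u1 _ (by omega)]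
    simp [hf, hg, this])
  have c2 := sum_close f (fun j => g (p * v.length + 1 + j)) w.length (q * v.length)
    (fun i => fg i _) (by
    intro i hi
    have : OccursPer w v i ↔
        OccursPer w (wordPow v p ++ [1] ++ wordPow v q) (p * v.length + 1 + i) := by
      unfold OccursPer
      refine forall₂_congr fun r hr => ?_
      rw [ul, Nat.mod_eq_of_lt (b := p * v.length + 1 + q * v.length) (by omega),
        add_assoc (p * v.length + 1), u2 _ (by omega)]
    simp [hf, hg, this])
  rw [sum_periodic f _ hper] at c1 c2
  rw [e, Finset.sum_range_add, Finset.sum_range_succ]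
  have g1 : |g (p * v.length)| ≤ 1 := by
    rw [hg]; dsimp only; split_ifs <;> simp
  rw [abs_le] at *
  constructor <;> linarith [c1.1, c1.2, c2.1, c2.2, g1.1, g1.2]

theorem hseq_lb (b : ℕ) (hb : 2 ≤ b) (k : ℕ) : 2 ^ k ≤ hseq b k := by
  induction k with
  | zero => simp [hseq]
  | succ k ih =>
    have h1 : 2 ^ (k+1) ≤ b ^ (k+1) := Nat.pow_le_pow_left hb _
    have h2 : 1 ≤ hseq b k := Nat.one_le_two_pow.trans ih
    simp only [hseq]
    have h3 := Nat.mul_le_mul h1 h2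
    omega

/-- for any word `w` over `{0,1}`, the densities `d k w` converge as `k → ∞`. -/
theorem dfreq_converges (b a : ℕ) (hb : 2 ≤ b) (ha1 : 1 ≤ a) (ha2 : a ≤ b - 1)
    (w : List ℕ) (hw : ∀ c ∈ w, c ≤ 1) :
    ∃ L : ℝ, Tendsto (fun k => dfreq b a k w) atTop (𝓝 L) := by
  classical
  have hab : a ≤ b := by omega
  refine cauchySeq_tendsto_of_complete ?_
  refine cauchySeq_of_le_geometric (1/2) (2 * w.length + 2) (by norm_num) ?_
  intro k
  have hc := count_close w (Bword b a k) (a * b ^ k) ((b - a) * b ^ k) _ _ rfl rfl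
  have hN : a * b^k + (b-a) * b^k = b ^ (k+1) := by
    rw [← Nat.add_mul, Nat.add_sub_cancel' hab, pow_succ, mul_comm]
  have hN' : ((a * b^k : ℕ) : ℝ) + ((b-a) * b^k : ℕ) = (b:ℝ) ^ (k+1) := by
    exact_mod_cast hN
  rw [hN', hN, Bword_len b a hab, Finset.sum_boole, Finset.sum_boole] at hc
  have hs : (hseq b (k+1) : ℝ) = (b:ℝ)^(k+1) * hseq b k + 1 := by simp [hseq]
  have hl1 : (2:ℝ)^k ≤ hseq b k := by exact_mod_cast hseq_lb b hb k
  have hl2 : (2:ℝ)^(k+1) ≤ hseq b (k+1) := by exact_mod_cast hseq_lb b hb (k+1)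
  have p2 : (0:ℝ) < 2^k := by positivity
  have hC : (((Finset.range (hseq b k)).filter fun i => OccursPer w (Bword b a k) i).card : ℝ)
      ≤ hseq b k := by
    have := Finset.card_filter_le (Finset.range (hseq b k)) (fun i => OccursPer w (Bword b a k) i)
    rw [Finset.card_range] at this
    exact_mod_cast this
  have e1 : dfreq b a k w = (((Finset.range (hseq b k)).filter
      fun i => OccursPer w (Bword b a k) i).card : ℝ) / (hseq b k : ℝ) := by
    unfold dfreq; congr!
  have e2 : dfreq b a (k+1) w = (((Finset.range (b ^ (k+1) * hseq b k + 1)).filter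
      fun i => OccursPer w (wordPow (Bword b a k) (a * b ^ k) ++ [1] ++
        wordPow (Bword b a k) ((b - a) * b ^ k)) i).card : ℝ) / (hseq b (k+1) : ℝ) := by
    unfold dfreq
    rw [show hseq b (k+1) = b ^ (k+1) * hseq b k + 1 from rfl]
    congr!
  rw [dist_comm, Real.dist_eq, e1, e2]
  have hC0 : (0:ℝ) ≤ (((Finset.range (hseq b k)).filter
    fun i => OccursPer w (Bword b a k) i).card : ℝ) := Nat.cast_nonneg _
  generalize (((Finset.range (hseq b k)).filter
    fun i => OccursPer w (Bword b a k) i).card : ℝ) = C at *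
  generalize (((Finset.range (b ^ (k+1) * hseq b k + 1)).filter
      fun i => OccursPer w (wordPow (Bword b a k) (a * b ^ k) ++ [1] ++
        wordPow (Bword b a k) ((b - a) * b ^ k)) i).card : ℝ) = D at *
  generalize (hseq b k : ℝ) = H at *
  generalize (hseq b (k+1) : ℝ) = H' at *
  have hH : 0 < H := by linarith
  have hH' : 0 < H' := by linarith [pow_pos (two_pos : (0:ℝ) < 2) (k+1)]
  have key : D / H' - C / H = ((D - (b:ℝ)^(k+1) * C) - C / H) / H' := by
    field_simp
    rw [hs]; ring
  have hCH : C / H ≤ 1 := (div_le_one hH).2 hC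
  have hCH0 : 0 ≤ C / H := by positivity
  rw [key, abs_div, abs_of_pos hH', div_pow, one_pow, mul_one_div]
  have hw0 : (0:ℝ) ≤ 2 * w.length + 2 := by positivity
  refine div_le_div₀ hw0 ?_ p2 ?_
  · rw [abs_le] at *
    constructor <;> linarith [hc.1, hc.2]
  · rw [pow_succ] at hl2; linarith
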